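/- (Schaefer fixed point theorem.) Let (E, ‖·‖_E) be a real Banach space and let T : E → E be a map that is continuous and compact (i.e. T maps bounded subsets of E into relatively compact subsets of E). If there exists a finite constant M such that for every λ ∈ [0,1] and every e ∈ E, the equation e = λ T(e) implies ‖e‖_E ≤ M, then there exists at least one e ∈ E with T(e) = e. -/

import Mathlib

/-!
Composing `T` with the radial retraction onto a ball of radius `R` gives a map with relatively
compact range, so it has a fixed point `z` by Schauder's theorem. If `‖z‖ ≤ R`, then `z` is a fixed
point of `T`; otherwise the retraction of `z` solves `x = (R / ‖z‖) • T x` with `‖x‖ = R`, which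
the a priori bound excludes.

Schauder's theorem follows from its finite-dimensional case by projecting onto the convex hull of a
finite net. That case is reduced by smoothing to a compactly supported `C¹` map `f`, for which
the change of variables `x ↦ x - t • f x` is used: for a polynomial `p` and a compact set `s`
containing the support of `f`, the integral over `s` of `p (‖x - t • f x‖ ^ 2) * det (1 - t • f' x)`
is a polynomial in `t`. For small `t` the map is a bijection of `s` and the integral is constant, so
it takes the same value at `t = 1`. By Weierstrass approximation the identity at `t = 1` extends
from `p` to continuous functions; one concentrated near `0` tells `x - f x` apart from a map
that avoids `0`.
-/

open Filter Function MeasureTheory Metric Polynomial Set Topology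

section PolynomialFamilies

variable {X E : Type*} [TopologicalSpace X] [NormedAddCommGroup E]

theorem exists_polynomial_eval_eq_setIntegral [MeasurableSpace X] [OpensMeasurableSpace X]
    [T2Space X] (μ : Measure X) [IsFiniteMeasureOnCompacts μ] {s : Set X} (hs : IsCompact s)
    (q : C(X, ℝ)[X]) :
    ∃ P : ℝ[X], ∀ t : ℝ, P.eval t = ∫ x in s, q.eval (algebraMap ℝ C(X, ℝ) t) x ∂μ := by
  refine ⟨∑ i ∈ q.support, monomial i (∫ x in s, q.coeff i x ∂μ), fun t => ?_⟩
  have hcoeff (i : ℕ) : IntegrableOn (fun x => q.coeff i x * t ^ i) s μ :=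
    (q.coeff i).continuous.continuousOn.integrableOn_compact hs |>.mul_const _
  rw [eval_finsetSum, eval_eq_sum]
  simp [Polynomial.sum, integral_finsetSum _ fun i _ => hcoeff i, integral_mul_const]

theorem exists_polynomial_eval_eq_eval_norm_sub_smul_sq [InnerProductSpace ℝ E] {u v : X → E}
    (hu : Continuous u) (hv : Continuous v) (p : ℝ[X]) :
    ∃ q : C(X, ℝ)[X], ∀ (t : ℝ) (x : X),
      q.eval (algebraMap ℝ C(X, ℝ) t) x = p.eval (‖u x - t • v x‖ ^ 2) := by
  let uu : C(X, ℝ) := ⟨fun x => ‖u x‖ ^ 2, by fun_prop⟩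
  let uv : C(X, ℝ) := ⟨fun x => 2 * inner ℝ (u x) (v x), by fun_prop⟩
  let vv : C(X, ℝ) := ⟨fun x => ‖v x‖ ^ 2, by fun_prop⟩
  refine ⟨(p.map (algebraMap ℝ C(X, ℝ))).comp (C uu - C uv * .X + C vv * .X ^ 2), fun t x => ?_⟩
  have hsq : ‖u x - t • v x‖ ^ 2 = uu x - uv x * t + vv x * t ^ 2 := by
    rw [norm_sub_sq_real, real_inner_smul_right, norm_smul, mul_pow, Real.norm_eq_abs, sq_abs]
    simp only [uu, uv, vv, ContinuousMap.coe_mk]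
    ring
  rw [hsq]
  simp only [eval_comp, eval_map_algebraMap]
  rw [← ContinuousMap.evalAlgHom_apply ℝ ℝ x, ← aeval_algHom_apply]
  simp [aeval_def, eval₂_eq_eval_map]

theorem exists_polynomial_eval_eq_det_one_sub_smul [NormedSpace ℝ E] [FiniteDimensional ℝ E]
    {A : X → E →L[ℝ] E} (hA : Continuous A) :
    ∃ q : C(X, ℝ)[X], ∀ (t : ℝ) (x : X),
      q.eval (algebraMap ℝ C(X, ℝ) t) x = (1 - t • A x).det := by
  let b := Module.finBasis ℝ E
  have hcoord (i j) : Continuous fun x => LinearMap.toMatrix b b (A x) i j := by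
    simp only [LinearMap.toMatrix_apply]
    have : Continuous fun v => b.repr v i := (b.coord i).continuous_of_finiteDimensional
    exact this.comp (hA.clm_apply continuous_const)
  let M : Matrix _ _ C(X, ℝ) := .of fun i j => ⟨_, hcoord i j⟩
  refine ⟨M.charpolyRev, fun t x => ?_⟩
  let φ : C(X, ℝ)[X] →+* ℝ :=
    (ContinuousMap.evalAlgHom ℝ ℝ x : C(X, ℝ) →+* ℝ).comp (evalRingHom (algebraMap ℝ C(X, ℝ) t))
  change φ M.charpolyRev = _
  rw [Matrix.charpolyRev, RingHom.map_det, ContinuousLinearMap.det, ← LinearMap.det_toMatrix b]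
  congr 1
  ext i j
  by_cases h : i = j <;> simp [φ, M, h, LinearMap.toMatrix_apply, mul_comm t]

end PolynomialFamilies

section ChangeOfVariables

theorem bijective_sub_of_contractingWith {E : Type*} [NormedAddCommGroup E] [CompleteSpace E]
    {K : NNReal} {f : E → E} (hf : ContractingWith K f) : Bijective fun x => x - f x := by
  refine bijective_iff_existsUnique _ |>.2 fun y => ?_
  have hy : ContractingWith K fun x => y + f x :=
    ⟨hf.1, LipschitzWith.of_dist_le_mul fun a b => by simpa using hf.2.dist_le_mul a b⟩
  refine ⟨hy.fixedPoint, sub_eq_iff_eq_add.2 hy.fixedPoint_isFixedPt.symm, fun x hx => ?_⟩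
  exact hy.fixedPoint_unique (sub_eq_iff_eq_add.1 hx).symm

theorem image_eq_of_bijective_of_eqOn_compl {α : Type*} {g : α → α} {s : Set α}
    (hg : Bijective g) (hs : EqOn g id sᶜ) : g '' s = s := by
  rw [← compl_inj_iff, ← image_compl_eq hg, hs.image_eq, image_id]

variable {E : Type*} [NormedAddCommGroup E] [NormedSpace ℝ E]

theorem eventually_contractingWith_smul {K : NNReal} {f : E → E} (hf : LipschitzWith K f) :
    ∀ᶠ t : ℝ in 𝓝 0, ContractingWith (‖t‖₊ * K) (t • f) := by
  have hlim : Tendsto (fun t : ℝ => ‖t‖₊ * K) (𝓝 0) (𝓝 0) := by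
    have : Continuous fun t : ℝ => ‖t‖₊ * K := by fun_prop
    simpa using this.tendsto 0
  filter_upwards [hlim.eventually_lt_const one_pos] with t ht
  exact ⟨ht, (lipschitzWith_smul t).comp hf⟩

theorem eventually_forall_det_one_sub_smul_pos {ι : Type*} {A : ι → E →L[ℝ] E} {K : ℝ}
    (hA : ∀ i, ‖A i‖ ≤ K) : ∀ᶠ t : ℝ in 𝓝 0, ∀ i, 0 < (1 - t • A i).det := by
  have hdet : ∀ᶠ B : E →L[ℝ] E in 𝓝 0, 0 < (1 - B).det := by
    have hcont : Continuous fun B : E →L[ℝ] E => (1 - B).det :=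
      ContinuousLinearMap.continuous_det.comp (continuous_const.sub continuous_id)
    exact hcont.continuousAt.eventually_const_lt (by simp [ContinuousLinearMap.det])
  have htA : Tendsto (fun t : ℝ => |t| * K) (𝓝 0) (𝓝 0) := by
    have : Continuous fun t : ℝ => |t| * K := by fun_prop
    simpa using this.tendsto 0
  obtain ⟨δ, hδ, hball⟩ := Metric.eventually_nhds_iff.1 hdet
  filter_upwards [htA.eventually_lt_const hδ] with t ht i
  refine hball ?_
  calc dist (t • A i) 0 = |t| * ‖A i‖ := by rw [dist_zero_right, norm_smul, Real.norm_eq_abs]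
    _ ≤ |t| * K := by gcongr; exact hA i
    _ < δ := ht

theorem eventually_setIntegral_comp_sub_smul_mul_det [FiniteDimensional ℝ E]
    [MeasurableSpace E] [BorelSpace E] (μ : Measure E) [μ.IsAddHaarMeasure] {f : E → E}
    (hf : ContDiff ℝ 1 f) {s : Set E} (hs : IsCompact s) (hfs : support f ⊆ s) :
    ∀ᶠ t : ℝ in 𝓝 0, ∀ φ : E → ℝ,
      ∫ x in s, φ (x - t • f x) * (1 - t • fderiv ℝ f x).det ∂μ = ∫ x in s, φ x ∂μ := by
  have hcs : HasCompactSupport f := .intro hs fun x hx => notMem_support.1 fun h => hx (hfs h)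
  obtain ⟨K, hK⟩ := hf.lipschitzWith_of_hasCompactSupport hcs one_ne_zero
  filter_upwards [eventually_contractingWith_smul hK, eventually_forall_det_one_sub_smul_pos
    fun x => norm_fderiv_le_of_lipschitz ℝ hK (x₀ := x)] with t hcontr hdet φ
  have hbij : Bijective fun x => x - t • f x := bijective_sub_of_contractingWith hcontr
  have himg : (fun x => x - t • f x) '' s = s :=
    image_eq_of_bijective_of_eqOn_compl hbij fun x hx => by
      simp [notMem_support.1 fun h => hx (hfs h)]
  have hderiv (x : E) : HasFDerivAt (fun x => x - t • f x) (1 - t • fderiv ℝ f x) x :=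
    (hasFDerivAt_id x).sub ((hf.differentiable one_ne_zero x).hasFDerivAt.const_smul t)
  have hcov := integral_image_eq_integral_abs_det_fderiv_smul μ hs.measurableSet
    (fun x _ => (hderiv x).hasFDerivWithinAt) hbij.injective.injOn φ
  simpa only [himg, abs_of_pos (hdet _), smul_eq_mul, mul_comm] using hcov.symm

end ChangeOfVariables

section PolynomialApproximation

variable {X : Type*} [TopologicalSpace X] [T2Space X] [MeasurableSpace X] [OpensMeasurableSpace X]
  {μ : Measure X} [IsFiniteMeasureOnCompacts μ] {s : Set X} {a b v w : X → ℝ}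

theorem tendsto_setIntegral_mul_of_tendstoUniformlyOn {ι : Type*} {l : Filter ι} [l.NeBot]
    [l.IsCountablyGenerated] (hs : IsCompact s) {F : ι → X → ℝ} {g : X → ℝ}
    (hF : ∀ i, ContinuousOn (F i) s) (hv : ContinuousOn v s) (hlim : TendstoUniformlyOn F g l s) :
    Tendsto (fun i => ∫ x in s, F i x * v x ∂μ) l (𝓝 (∫ x in s, g x * v x ∂μ)) := by
  have hg : ContinuousOn g s := hlim.continuousOn (.of_forall hF)
  refine tendsto_integral_filter_of_dominated_convergence (fun x => (|g x| + 1) * |v x|)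
    (.of_forall fun i => ((hF i).mul hv).aestronglyMeasurable hs.measurableSet) ?_
    (((hg.abs.add continuousOn_const).mul hv.abs).integrableOn_compact hs) ?_
  · filter_upwards [Metric.tendstoUniformlyOn_iff.1 hlim 1 one_pos] with i hi
    refine ae_restrict_of_forall_mem hs.measurableSet fun x hx => ?_
    have hdist : |F i x - g x| < 1 := by simpa [Real.dist_eq, abs_sub_comm] using hi x hx
    rw [norm_mul, Real.norm_eq_abs, Real.norm_eq_abs]
    gcongr
    linarith [abs_sub_abs_le_abs_sub (F i x) (g x)]
  · exact ae_restrict_of_forall_mem hs.measurableSet fun x hx => (hlim.tendsto_at hx).mul_const _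

theorem exists_seq_polynomial_tendstoUniformlyOn {ψ : ℝ → ℝ} (hψ : Continuous ψ) {t : Set ℝ}
    (ht : Bornology.IsBounded t) :
    ∃ p : ℕ → ℝ[X], TendstoUniformlyOn (fun n => (p n).eval) ψ atTop t := by
  obtain ⟨c, htc⟩ := ht.subset_closedBall 0
  rw [Real.closedBall_eq_Icc] at htc
  choose p hp using fun n : ℕ => exists_polynomial_near_of_continuousOn _ _ ψ hψ.continuousOn
    (1 / (n + 1)) Nat.one_div_pos_of_nat
  refine ⟨p, Metric.tendstoUniformlyOn_iff.2 fun ε hε => ?_⟩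
  filter_upwards [tendsto_one_div_add_atTop_nhds_zero_nat.eventually_lt_const hε] with n hn u hu
  rw [dist_comm, Real.dist_eq]
  exact (hp n u (htc hu)).trans hn

theorem setIntegral_comp_mul_eq_of_forall_polynomial (hs : IsCompact s) (ha : ContinuousOn a s)
    (hb : ContinuousOn b s) (hv : ContinuousOn v s) (hw : ContinuousOn w s)
    (hpoly : ∀ p : ℝ[X], ∫ x in s, p.eval (a x) * v x ∂μ = ∫ x in s, p.eval (b x) * w x ∂μ)
    {ψ : ℝ → ℝ} (hψ : Continuous ψ) :
    ∫ x in s, ψ (a x) * v x ∂μ = ∫ x in s, ψ (b x) * w x ∂μ := by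
  obtain ⟨p, hp⟩ := exists_seq_polynomial_tendstoUniformlyOn hψ
    ((hs.image_of_continuousOn ha).union (hs.image_of_continuousOn hb)).isBounded
  have hlim {c u : X → ℝ} (hc : ContinuousOn c s) (hu : ContinuousOn u s)
      (hcp : c '' s ⊆ a '' s ∪ b '' s) :
      Tendsto (fun n => ∫ x in s, (p n).eval (c x) * u x ∂μ) atTop
        (𝓝 (∫ x in s, ψ (c x) * u x ∂μ)) :=
    tendsto_setIntegral_mul_of_tendstoUniformlyOn hs
      (fun n => (p n).continuous.comp_continuousOn hc) hu
      ((hp.comp c).mono (image_subset_iff.1 hcp))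
  refine tendsto_nhds_unique (hlim ha hv subset_union_left) ?_
  simpa only [hpoly] using hlim hb hw subset_union_right

end PolynomialApproximation

section Degree

variable {E : Type*} [NormedAddCommGroup E] [InnerProductSpace ℝ E] [FiniteDimensional ℝ E]
  [MeasurableSpace E] [BorelSpace E] (μ : Measure E) [μ.IsAddHaarMeasure] {f : E → E} {s : Set E}

theorem setIntegral_eval_norm_sub_sq_mul_det (hf : ContDiff ℝ 1 f) (hs : IsCompact s)
    (hfs : support f ⊆ s) (p : ℝ[X]) :
    ∫ x in s, p.eval (‖x - f x‖ ^ 2) * (1 - fderiv ℝ f x).det ∂μ =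
      ∫ x in s, p.eval (‖x‖ ^ 2) ∂μ := by
  obtain ⟨q₁, hq₁⟩ := exists_polynomial_eval_eq_eval_norm_sub_smul_sq continuous_id hf.continuous p
  obtain ⟨q₂, hq₂⟩ := exists_polynomial_eval_eq_det_one_sub_smul (hf.continuous_fderiv one_ne_zero)
  obtain ⟨P, hP⟩ := exists_polynomial_eval_eq_setIntegral μ hs (q₁ * q₂)
  simp only [eval_mul, ContinuousMap.mul_apply, hq₁, hq₂, id] at hP
  have hPconst : P = C (∫ x in s, p.eval (‖x‖ ^ 2) ∂μ) := by
    have hev := eventually_setIntegral_comp_sub_smul_mul_det μ hf hs hfs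
    refine eq_of_infinite_eval_eq _ _ ((infinite_of_mem_nhds 0 hev).mono fun t ht => ?_)
    simpa [hP] using ht fun x => p.eval (‖x‖ ^ 2)
  simpa [hPconst] using (hP 1).symm

theorem setIntegral_comp_norm_sub_sq_mul_det (hf : ContDiff ℝ 1 f) (hs : IsCompact s)
    (hfs : support f ⊆ s) {ψ : ℝ → ℝ} (hψ : Continuous ψ) :
    ∫ x in s, ψ (‖x - f x‖ ^ 2) * (1 - fderiv ℝ f x).det ∂μ = ∫ x in s, ψ (‖x‖ ^ 2) ∂μ := by
  have hfc := hf.continuous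
  have hdet : Continuous fun x => (1 - fderiv ℝ f x).det :=
    ContinuousLinearMap.continuous_det.comp
      (continuous_const.sub (hf.continuous_fderiv one_ne_zero))
  simpa using setIntegral_comp_mul_eq_of_forall_polynomial (μ := μ) (w := 1)
    hs (a := fun x => ‖x - f x‖ ^ 2) (b := fun x => ‖x‖ ^ 2) (by fun_prop) (by fun_prop)
    hdet.continuousOn continuousOn_const
    (by simpa using setIntegral_eval_norm_sub_sq_mul_det μ hf hs hfs) hψ

end Degree

section Brouwer

theorem exists_isFixedPt_of_contDiff_of_hasCompactSupport {E : Type*} [NormedAddCommGroup E]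
    [InnerProductSpace ℝ E] [FiniteDimensional ℝ E] {f : E → E} (hf : ContDiff ℝ 1 f)
    (hfs : HasCompactSupport f) : ∃ x, IsFixedPt f x := by
  borelize E
  by_contra! hfix
  obtain ⟨r, hr, hfr⟩ := hfs.isCompact.isBounded.subset_closedBall_lt 0 (0 : E)
  have hcomp : IsCompact (closedBall (0 : E) r) := isCompact_closedBall 0 r
  obtain ⟨δ, hδ, hδf⟩ : ∃ δ > 0, ∀ x ∈ closedBall (0 : E) r, δ ≤ ‖x - f x‖ := by
    have hfc := hf.continuous
    refine hcomp.exists_forall_le' (a := 0) (by fun_prop) fun x _ => ?_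
    exact norm_pos_iff.2 (sub_ne_zero.2 (Ne.symm (hfix x)))
  let ψ : ℝ → ℝ := fun u => max 0 (δ ^ 2 - u)
  have hψ : Continuous ψ := by fun_prop
  have hzero : ∫ x in closedBall (0 : E) r, ψ (‖x‖ ^ 2) = 0 := by
    rw [← setIntegral_comp_norm_sub_sq_mul_det volume hf hcomp ((subset_tsupport f).trans hfr) hψ]
    refine setIntegral_eq_zero_of_forall_eq_zero fun x hx => ?_
    have : ψ (‖x - f x‖ ^ 2) = 0 := max_eq_left (sub_nonpos.2 (by gcongr; exact hδf x hx))
    rw [this, zero_mul]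
  have hpos : 0 < ∫ x in closedBall (0 : E) r, ψ (‖x‖ ^ 2) := by
    have hint : IntegrableOn (fun x : E => ψ (‖x‖ ^ 2)) (closedBall 0 r) :=
      Continuous.continuousOn (by fun_prop) |>.integrableOn_compact hcomp
    refine (setIntegral_pos_iff_support_of_nonneg_ae (.of_forall fun x => le_max_left _ _)
      hint).2 ?_
    refine (measure_ball_pos volume (0 : E) (lt_min hδ hr)).trans_le (measure_mono fun x hx => ?_)
    obtain ⟨hxδ, hxr⟩ := lt_min_iff.1 (mem_ball_zero_iff.1 hx)
    refine ⟨(lt_max_of_lt_right (sub_pos.2 ?_)).ne', mem_closedBall_zero_iff.2 hxr.le⟩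
    gcongr
  exact hpos.ne' hzero

theorem exists_isFixedPt_of_forall_norm_le {E : Type*} [NormedAddCommGroup E]
    [InnerProductSpace ℝ E] [FiniteDimensional ℝ E] {f : E → E} (hf : Continuous f) {R : ℝ}
    (hR : ∀ x, ‖f x‖ ≤ R) : ∃ x, IsFixedPt f x := by
  have hR₀ : 0 ≤ R := (norm_nonneg _).trans (hR 0)
  let χ : ContDiffBump (0 : E) := ⟨R + 1, R + 2, by positivity, by linarith⟩
  let h : E → E := fun x => χ x • f x
  have hh : Continuous h := χ.continuous.smul hf
  have hfix_of_h {x : E} (hx : IsFixedPt h x) : IsFixedPt f x := by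
    have hxR : ‖x‖ ≤ R := by
      calc ‖x‖ = χ x * ‖f x‖ := by
            rw [← Real.norm_of_nonneg χ.nonneg, ← norm_smul]; exact congrArg norm hx.symm
        _ ≤ 1 * R := by gcongr; exacts [χ.le_one, hR x]
        _ = R := one_mul R
    have hχ : χ x = 1 := χ.one_of_mem_closedBall (mem_closedBall_zero_iff.2 (by linarith))
    simpa [h, IsFixedPt, hχ] using hx
  by_contra! hfix
  have hpos (x : E) : 0 < dist x (h x) := dist_pos.2 fun hx => hfix x (hfix_of_h hx.symm)
  obtain ⟨g, hg, hgh, hgsupp⟩ := hh.exists_contDiff_approx 1 (continuous_id.dist hh) hpos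
  have hgcs : HasCompactSupport g := (χ.hasCompactSupport.smul_right (f' := f)).mono hgsupp
  obtain ⟨x, hx⟩ := exists_isFixedPt_of_contDiff_of_hasCompactSupport hg hgcs
  have := hgh x
  rw [hx] at this
  exact this.false

theorem exists_isFixedPt_of_isBounded_range {V : Type*} [NormedAddCommGroup V]
    [NormedSpace ℝ V] [FiniteDimensional ℝ V] {f : V → V} (hf : Continuous f)
    (hbdd : Bornology.IsBounded (range f)) : ∃ x, IsFixedPt f x := by
  let e := toEuclidean (E := V)
  obtain ⟨R, hR⟩ := (e.lipschitz.isBounded_image hbdd).exists_norm_le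
  obtain ⟨x, hx⟩ := exists_isFixedPt_of_forall_norm_le
    (f := e ∘ f ∘ e.symm) (by fun_prop) fun x => hR _ ⟨_, ⟨e.symm x, rfl⟩, rfl⟩
  exact ⟨e.symm x, e.injective (by simpa [IsFixedPt] using hx)⟩

end Brouwer

section Schauder

theorem sum_max_zero_sub_dist_pos {X : Type*} [PseudoMetricSpace X] {F : Finset X} {ε : ℝ} {x : X}
    (hx : x ∈ ⋃ y ∈ F, ball y ε) :
    0 < ∑ y ∈ F, max 0 (ε - dist x y) := by
  obtain ⟨y, hy, hxy⟩ := mem_iUnion₂.1 hx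
  exact Finset.sum_pos' (fun _ _ => le_max_left _ _)
    ⟨y, hy, lt_max_of_lt_right (sub_pos.2 (mem_ball.1 hxy))⟩

variable {E : Type*} [NormedAddCommGroup E] [NormedSpace ℝ E] {F : Finset E} {ε : ℝ} {x : E}

/-- The Schauder projection onto the convex hull of a finite set `F` at scale `ε`: the average of
the points of `F`, weighted by how far they lie inside the ball of radius `ε` around `x`. It moves
the points of an `ε`-neighbourhood of `F` by less than `ε`; elsewhere the weights vanish and its
value is `0`. -/
noncomputable def schauderProjection (F : Finset E) (ε : ℝ) (x : E) : E :=
  F.centerMass (fun y => max 0 (ε - dist x y)) id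

theorem continuousOn_schauderProjection :
    ContinuousOn (schauderProjection F ε) (⋃ y ∈ F, ball y ε) :=
  .smul (.inv₀ (by fun_prop) fun _ hx => (sum_max_zero_sub_dist_pos hx).ne') (by fun_prop)

theorem schauderProjection_mem_convexHull (hx : x ∈ ⋃ y ∈ F, ball y ε) :
    schauderProjection F ε x ∈ convexHull ℝ (F : Set E) :=
  F.centerMass_id_mem_convexHull (fun _ _ => le_max_left _ _) (sum_max_zero_sub_dist_pos hx)

theorem dist_schauderProjection_lt (hx : x ∈ ⋃ y ∈ F, ball y ε) :
    dist (schauderProjection F ε x) x < ε := by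
  classical
  rw [schauderProjection, ← Finset.centerMass_filter_ne_zero, ← mem_ball]
  refine (convex_ball x ε).centerMass_mem (fun _ _ => le_max_left _ _) ?_ fun y hy => ?_
  · simpa only [Finset.sum_filter_ne_zero] using sum_max_zero_sub_dist_pos hx
  · by_contra hxy
    exact (Finset.mem_filter.1 hy).2 (max_eq_left (sub_nonpos.2 (by simpa [dist_comm] using hxy)))

theorem exists_isFixedPt_of_forall_mem_convexHull {f : E → E} (hf : Continuous f)
    (hfF : ∀ x, f x ∈ convexHull ℝ (F : Set E)) : ∃ x, IsFixedPt f x := by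
  let V := Submodule.span ℝ (F : Set E)
  have hfV (x : E) : f x ∈ V := convexHull_min Submodule.subset_span V.convex (hfF x)
  let g : V → V := fun v => ⟨f v, hfV v⟩
  have hbdd : Bornology.IsBounded (range g) := by
    obtain ⟨R, hR⟩ := ((isBounded_convexHull (E := E)).2 F.finite_toSet.isBounded).exists_norm_le
    exact isBounded_iff_forall_norm_le.2 ⟨R, forall_mem_range.2 fun v => hR _ (hfF v)⟩
  obtain ⟨v, hv⟩ := exists_isFixedPt_of_isBounded_range (f := g) (by fun_prop) hbdd
  exact ⟨v, congrArg Subtype.val hv⟩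

theorem exists_isFixedPt_of_forall_exists_dist_lt {X : Type*} [MetricSpace X] {f : X → X}
    (hf : Continuous f) {K : Set X} (hK : IsCompact K) (hfK : ∀ x, f x ∈ K)
    (happrox : ∀ ε > 0, ∃ x, dist x (f x) < ε) : ∃ x, IsFixedPt f x := by
  choose x hx using fun n : ℕ => happrox (1 / (n + 1)) Nat.one_div_pos_of_nat
  obtain ⟨z, -, φ, hφ, hfz⟩ := hK.tendsto_subseq fun n => hfK (x n)
  have hdist : Tendsto (fun n => dist (f (x (φ n))) (x (φ n))) atTop (𝓝 0) :=
    squeeze_zero (fun _ => dist_nonneg) (fun n => (dist_comm _ _).trans_le (hx (φ n)).le)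
      (tendsto_one_div_add_atTop_nhds_zero_nat.comp hφ.tendsto_atTop)
  have hxz : Tendsto (x ∘ φ) atTop (𝓝 z) := (tendsto_iff_of_dist hdist).1 hfz
  exact ⟨z, tendsto_nhds_unique ((hf.tendsto z).comp hxz) hfz⟩

theorem exists_isFixedPt_of_forall_mem_isCompact {f : E → E} (hf : Continuous f) {K : Set E}
    (hK : IsCompact K) (hfK : ∀ x, f x ∈ K) : ∃ x, IsFixedPt f x := by
  refine exists_isFixedPt_of_forall_exists_dist_lt hf hK hfK fun ε hε => ?_
  obtain ⟨t, -, ht, hcover⟩ := hK.finite_cover_balls hε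
  lift t to Finset E using ht
  have hfU (x : E) : f x ∈ ⋃ y ∈ t, ball y ε := hcover (hfK x)
  obtain ⟨x, hx⟩ := exists_isFixedPt_of_forall_mem_convexHull
    (continuousOn_schauderProjection.comp_continuous hf hfU)
    fun x => schauderProjection_mem_convexHull (hfU x)
  refine ⟨x, ?_⟩
  have hPx : schauderProjection t ε (f x) = x := hx
  simpa only [hPx] using dist_schauderProjection_lt (hfU x)

end Schauder

section LeraySchauder

variable {E : Type*} [NormedAddCommGroup E] [NormedSpace ℝ E] {R : ℝ}

/-- The radial retraction of a normed space onto its closed ball of radius `R` centred at `0`,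
for `0 < R`. -/
noncomputable def radialRetraction (R : ℝ) (x : E) : E := (R / max R ‖x‖) • x

theorem continuous_radialRetraction (hR : 0 < R) :
    Continuous (radialRetraction R : E → E) :=
  (continuous_const.div (by fun_prop) fun _ => (lt_max_of_lt_left hR).ne').smul continuous_id

theorem radialRetraction_of_norm_le (hR : 0 < R) {x : E} (hx : ‖x‖ ≤ R) :
    radialRetraction R x = x := by
  rw [radialRetraction, max_eq_left hx, div_self hR.ne', one_smul]

theorem radialRetraction_of_lt_norm {x : E} (hx : R < ‖x‖) :
    radialRetraction R x = (R / ‖x‖) • x := by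
  rw [radialRetraction, max_eq_right hx.le]

theorem norm_radialRetraction_of_lt_norm (hR : 0 < R) {x : E} (hx : R < ‖x‖) :
    ‖radialRetraction R x‖ = R := by
  have hx₀ : 0 < ‖x‖ := hR.trans hx
  rw [radialRetraction_of_lt_norm hx, norm_smul, Real.norm_of_nonneg (by positivity),
    div_mul_cancel₀ _ hx₀.ne']

theorem radialRetraction_mem_closedBall (hR : 0 < R) (x : E) :
    radialRetraction R x ∈ closedBall 0 R := by
  rw [mem_closedBall_zero_iff]
  rcases le_or_gt ‖x‖ R with hx | hx
  · rwa [radialRetraction_of_norm_le hR hx]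
  · exact (norm_radialRetraction_of_lt_norm hR hx).le

theorem schaefer_fixed_point_general {T : E → E} (hR : 0 < R)
    (hT_cont : ContinuousOn T (closedBall 0 R)) {K : Set E} (hK : IsCompact K)
    (hTK : MapsTo T (closedBall 0 R) K)
    (hT_sphere : ∀ t ∈ Ioo (0 : ℝ) 1, ∀ x, x = t • T x → ‖x‖ ≠ R) :
    ∃ x ∈ closedBall (0 : E) R, T x = x := by
  have hρ (x : E) := radialRetraction_mem_closedBall hR x
  obtain ⟨z, hz⟩ : ∃ z, T (radialRetraction R z) = z := exists_isFixedPt_of_forall_mem_isCompact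
    (hT_cont.comp_continuous (continuous_radialRetraction hR) hρ) hK fun x => hTK (hρ x)
  rcases le_or_gt ‖z‖ R with hzR | hzR
  · exact ⟨z, mem_closedBall_zero_iff.2 hzR, by rwa [radialRetraction_of_norm_le hR hzR] at hz⟩
  · have ht : R / ‖z‖ ∈ Ioo (0 : ℝ) 1 :=
      ⟨div_pos hR (hR.trans hzR), (div_lt_one (hR.trans hzR)).2 hzR⟩
    have hsol : radialRetraction R z = (R / ‖z‖) • T (radialRetraction R z) := by
      rw [hz, radialRetraction_of_lt_norm hzR]
    exact absurd (norm_radialRetraction_of_lt_norm hR hzR) (hT_sphere _ ht _ hsol)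

end LeraySchauder

/-- **Schaefer's fixed point theorem.** Let `E` be a real Banach space and `T : E → E`
a continuous map which is compact (it maps bounded sets to relatively compact sets).
If there is a finite constant `M` such that every solution `e` of `e = λ • T e` with
`λ ∈ [0,1]` satisfies `‖e‖ ≤ M`, then `T` has a fixed point. -/
theorem schaefer_fixed_point {E : Type*} [NormedAddCommGroup E] [NormedSpace ℝ E]
    [CompleteSpace E] (T : E → E) (hT_cont : Continuous T)
    (hT_compact : ∀ s : Set E, Bornology.IsBounded s → IsCompact (closure (T '' s)))
    (M : ℝ)
    (hM : ∀ lam : ℝ, lam ∈ Set.Icc (0 : ℝ) 1 → ∀ e : E, e = lam • T e → ‖e‖ ≤ M) :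
    ∃ e : E, T e = e := by
  have hMR : M < |M| + 1 := (le_abs_self M).trans_lt (lt_add_one |M|)
  obtain ⟨e, -, he⟩ := schaefer_fixed_point_general (by positivity) hT_cont.continuousOn
    (hT_compact _ isBounded_closedBall) ((mapsTo_image T _).mono_right subset_closure)
    fun t ht x hx => ((hM t (Ioo_subset_Icc_self ht) x hx).trans_lt hMR).ne
  exact ⟨e, he⟩
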